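/- Let A be a Nakayama algebra and S a simple module. Then pd S is finite and odd, or pd IS is finite and even; in particular, at least one of S and IS has finite projective dimension. -/

import Mathlib

open CategoryTheory CategoryTheory.Limits

noncomputable section

namespace ArtinAlg

variable (A : Type) [Ring A]

/-- `M` admits a projective resolution of length at most `n`. -/
inductive ProjDimLE : ℕ → ModuleCat.{0} A → Prop
  | zero (M : ModuleCat.{0} A) (h : Projective M) : ProjDimLE 0 M
  | succ (n : ℕ) (M P : ModuleCat.{0} A) (f : P ⟶ M) (hP : Projective P) (hf : Epi f)
      (h : ProjDimLE n (kernel f)) : ProjDimLE (n + 1) M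

/-- `M` admits an injective coresolution of length at most `n`. -/
inductive InjDimLE : ℕ → ModuleCat.{0} A → Prop
  | zero (M : ModuleCat.{0} A) (h : Injective M) : InjDimLE 0 M
  | succ (n : ℕ) (M I : ModuleCat.{0} A) (f : M ⟶ I) (hI : Injective I) (hf : Mono f)
      (h : InjDimLE n (cokernel f)) : InjDimLE (n + 1) M

/-- The projective dimension `pd M ∈ ℕ∞`. -/
def projDim (M : ModuleCat.{0} A) : ℕ∞ :=
  sInf {d : ℕ∞ | ∃ n : ℕ, d = n ∧ ProjDimLE A n M}

/-- The injective dimension `id M ∈ ℕ∞`. -/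
def injDim (M : ModuleCat.{0} A) : ℕ∞ :=
  sInf {d : ℕ∞ | ∃ n : ℕ, d = n ∧ InjDimLE A n M}

/-- `f : P ⟶ M` is a projective cover: `P` is projective and `f` is an essential
(superfluous) epimorphism. -/
def IsProjectiveCoverHom {P M : ModuleCat.{0} A} (f : P ⟶ M) : Prop :=
  Projective P ∧ Epi f ∧ ∀ (N : ModuleCat.{0} A) (g : N ⟶ P), Epi (g ≫ f) → Epi g

/-- `P` is a projective cover of `M`. -/
def IsProjCoverOf (M P : ModuleCat.{0} A) : Prop :=
  ∃ f : P ⟶ M, IsProjectiveCoverHom A f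

/-- `f : M ⟶ I` is an injective envelope: `I` is injective and `f` is an essential
monomorphism. -/
def IsInjectiveEnvelopeHom {M I : ModuleCat.{0} A} (f : M ⟶ I) : Prop :=
  Injective I ∧ Mono f ∧ ∀ (N : ModuleCat.{0} A) (g : I ⟶ N), Mono (f ≫ g) → Mono g

/-- `I` is an injective envelope of `M`. -/
def IsInjEnvOf (M I : ModuleCat.{0} A) : Prop :=
  ∃ f : M ⟶ I, IsInjectiveEnvelopeHom A f

/-- `X ≅ Ω M`, the kernel of a projective cover of `M`. -/
def IsSyzygyOf (M X : ModuleCat.{0} A) : Prop :=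
  ∃ (P : ModuleCat.{0} A) (f : P ⟶ M), IsProjectiveCoverHom A f ∧ Nonempty (X ≅ kernel f)

/-- `X ≅ Σ M`, the cokernel of an injective envelope of `M`. -/
def IsCosyzygyOf (M X : ModuleCat.{0} A) : Prop :=
  ∃ (I : ModuleCat.{0} A) (f : M ⟶ I), IsInjectiveEnvelopeHom A f ∧ Nonempty (X ≅ cokernel f)

/-- `X ≅ Ω^n M`. -/
def IsNthSyzygy : ℕ → ModuleCat.{0} A → ModuleCat.{0} A → Prop
  | 0, M, X => Nonempty (X ≅ M)
  | n + 1, M, X => ∃ Y, IsSyzygyOf A M Y ∧ IsNthSyzygy n Y X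

/-- `X ≅ Σ^n M`. -/
def IsNthCosyzygy : ℕ → ModuleCat.{0} A → ModuleCat.{0} A → Prop
  | 0, M, X => Nonempty (X ≅ M)
  | n + 1, M, X => ∃ Y, IsCosyzygyOf A M Y ∧ IsNthCosyzygy n Y X

/-- `X` is a direct summand of `Y`. -/
def IsDirectSummandOf (X Y : ModuleCat.{0} A) : Prop :=
  ∃ (i : X ⟶ Y) (r : Y ⟶ X), i ≫ r = 𝟙 X

/-- `X ∈ add W` : `X` is a direct summand of a finite direct sum of copies of `W`. -/
def InAdd (X W : ModuleCat.{0} A) : Prop :=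
  ∃ n : ℕ, IsDirectSummandOf A X (ModuleCat.of A (Fin n → ↥W))

/-- The delooping level of `M` is at most `d` :
`Ω^d M ∈ add (A ⊕ Ω^{d+1} M')` for some finitely generated `M'`. -/
def DelLE (d : ℕ) (M : ModuleCat.{0} A) : Prop :=
  ∃ X, IsNthSyzygy A d M X ∧
    ∃ M' : ModuleCat.{0} A, Module.Finite A ↥M' ∧
      ∃ X', IsNthSyzygy A (d + 1) M' X' ∧ InAdd A X (ModuleCat.of A (A × ↥X'))

/-- The delooping level `del M ∈ ℕ∞`. -/
def delLevel (M : ModuleCat.{0} A) : ℕ∞ :=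
  sInf {d : ℕ∞ | ∃ n : ℕ, d = n ∧ DelLE A n M}

/-- The delooping level of the algebra: the supremum of `del S` over the simple modules. -/
def delAlg : ℕ∞ :=
  sSup {d : ℕ∞ | ∃ S : ModuleCat.{0} A, IsSimpleModule A ↥S ∧ delLevel A S = d}

/-- `Q` is a minimal injective cogenerator: the injective envelope of the direct sum of
a complete set of representatives of the simple modules. -/
def IsMinimalInjectiveCogenerator (Q : ModuleCat.{0} A) : Prop :=
  ∃ (ι : Type) (_ : Fintype ι) (S : ι → ModuleCat.{0} A),
    (∀ i, IsSimpleModule A ↥(S i)) ∧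
    (∀ T : ModuleCat.{0} A, IsSimpleModule A ↥T → ∃! i, Nonempty (↥T ≃ₗ[A] ↥(S i))) ∧
    IsInjEnvOf A (ModuleCat.of A (∀ i, ↥(S i))) Q

/-- The desuspending level of `M` is at most `d` :
`Σ^d M ∈ add (D(A) ⊕ Σ^{d+1} M')` for some finitely generated `M'`. -/
def DesLE (d : ℕ) (M : ModuleCat.{0} A) : Prop :=
  ∃ X, IsNthCosyzygy A d M X ∧
    ∃ Q, IsMinimalInjectiveCogenerator A Q ∧
      ∃ M' : ModuleCat.{0} A, Module.Finite A ↥M' ∧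
        ∃ X', IsNthCosyzygy A (d + 1) M' X' ∧ InAdd A X (ModuleCat.of A (↥Q × ↥X'))

/-- The desuspending level `des M ∈ ℕ∞`. -/
def desLevel (M : ModuleCat.{0} A) : ℕ∞ :=
  sInf {d : ℕ∞ | ∃ n : ℕ, d = n ∧ DesLE A n M}

/-- The desuspending level of the algebra. -/
def desAlg : ℕ∞ :=
  sSup {d : ℕ∞ | ∃ S : ModuleCat.{0} A, IsSimpleModule A ↥S ∧ desLevel A S = d}

/-- The (small) finitistic projective dimension `fin-pro A`. -/
def finProDim : ℕ∞ :=
  sSup {d : ℕ∞ | ∃ M : ModuleCat.{0} A, Module.Finite A ↥M ∧ projDim A M = d ∧ d ≠ ⊤}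

/-- The (small) finitistic injective dimension `fin-inj A`. -/
def finInjDim : ℕ∞ :=
  sSup {d : ℕ∞ | ∃ M : ModuleCat.{0} A, Module.Finite A ↥M ∧ injDim A M = d ∧ d ≠ ⊤}

/-- The big finitistic projective dimension `Fin-pro A`. -/
def bigFinProDim : ℕ∞ :=
  sSup {d : ℕ∞ | ∃ M : ModuleCat.{0} A, projDim A M = d ∧ d ≠ ⊤}

/-- The big finitistic injective dimension `Fin-inj A`. -/
def bigFinInjDim : ℕ∞ :=
  sSup {d : ℕ∞ | ∃ M : ModuleCat.{0} A, injDim A M = d ∧ d ≠ ⊤}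

/-- `M` is an indecomposable nonzero module. -/
def Indec (M : ModuleCat.{0} A) : Prop :=
  Nontrivial ↥M ∧ ∀ (N₁ N₂ : Submodule A ↥M), IsCompl N₁ N₂ → N₁ = ⊥ ∨ N₂ = ⊥

/-- `M` is serial (uniserial): its submodules form a chain. -/
def IsUniserial (M : ModuleCat.{0} A) : Prop :=
  ∀ N₁ N₂ : Submodule A ↥M, N₁ ≤ N₂ ∨ N₂ ≤ N₁

/-- `A` is a Nakayama algebra: all finitely generated indecomposable modules are serial. -/
def IsNakayama : Prop :=
  ∀ M : ModuleCat.{0} A, Module.Finite A ↥M → Indec A M → IsUniserial A M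

/-- `A` is connected: it is not a nontrivial product of algebras. -/
def IsConnectedAlgebra : Prop :=
  Nontrivial A ∧ ∀ e : A, IsIdempotentElem e → e ∈ Set.center A → e = 0 ∨ e = 1

/-- `A` is a cyclic Nakayama algebra: connected Nakayama with no simple projective module. -/
def IsCyclicNakayama : Prop :=
  IsNakayama A ∧ IsConnectedAlgebra A ∧
    ¬ ∃ S : ModuleCat.{0} A, IsSimpleModule A ↥S ∧ Projective S

/-- `T ≅ top M` (and `top M` is simple): there is an essential epimorphism `M ⟶ T`. -/
def IsSimpleTopOf (M T : ModuleCat.{0} A) : Prop :=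
  IsSimpleModule A ↥T ∧
    ∃ f : M ⟶ T, Epi f ∧ ∀ (N : ModuleCat.{0} A) (g : N ⟶ M), Epi (g ≫ f) → Epi g

/-- `S ≅ soc M` (and `soc M` is simple): there is an essential monomorphism `S ⟶ M`. -/
def IsSimpleSocOf (M S : ModuleCat.{0} A) : Prop :=
  IsSimpleModule A ↥S ∧
    ∃ f : S ⟶ M, Mono f ∧ ∀ (N : ModuleCat.{0} A) (g : M ⟶ N), Mono (f ≫ g) → Mono g

/-- `0 ⟶ N ⟶ E ⟶ M ⟶ 0` is an almost split (Auslander-Reiten) sequence. -/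
def IsAlmostSplitSeq {N E M : ModuleCat.{0} A} (f : N ⟶ E) (g : E ⟶ M) : Prop :=
  Mono f ∧ Epi g ∧ (∃ w : f ≫ g = 0, (ShortComplex.mk f g w).Exact) ∧
  (¬ ∃ s : M ⟶ E, s ≫ g = 𝟙 M) ∧ Indec A N ∧ Indec A M ∧
  ∀ (X : ModuleCat.{0} A) (h : X ⟶ M), (¬ ∃ s : M ⟶ X, s ≫ h = 𝟙 M) → ∃ h' : X ⟶ E, h' ≫ g = h

/-- `N ≅ τ M`, the Auslander-Reiten translate of `M` : there is an almost split sequence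
`0 ⟶ N ⟶ E ⟶ M ⟶ 0`. -/
def IsTauOf (N M : ModuleCat.{0} A) : Prop :=
  ∃ (E : ModuleCat.{0} A) (f : N ⟶ E) (g : E ⟶ M), IsAlmostSplitSeq A f g

/-- `U ≅ ψ S = τ⁻ top (I S)`. -/
def IsPsiOf (S U : ModuleCat.{0} A) : Prop :=
  ∃ I, IsInjEnvOf A S I ∧ ∃ T, IsSimpleTopOf A I T ∧ IsTauOf A T U

/-- `T ≅ γ S = τ soc (P S)`. -/
def IsGammaOf (S T : ModuleCat.{0} A) : Prop :=
  ∃ P, IsProjCoverOf A S P ∧ ∃ U, IsSimpleSocOf A P U ∧ IsTauOf A T U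

/-- `T ≅ φ S = top (I S)`. -/
def IsPhiOf (S T : ModuleCat.{0} A) : Prop :=
  ∃ I, IsInjEnvOf A S I ∧ IsSimpleTopOf A I T

/-- There is a `ψ`-path `(S_1, …, S_m)` of cardinality `m` ending in `S`. -/
def PsiPathTo (m : ℕ) (S : ModuleCat.{0} A) : Prop :=
  1 ≤ m ∧ ∃ c : ℕ → ModuleCat.{0} A,
    (∀ i < m, IsSimpleModule A ↥(c i)) ∧
    (∀ i, i + 1 < m → IsPsiOf A (c i) (c (i + 1))) ∧
    Nonempty (c (m - 1) ≅ S)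

/-- `a(S)`: the supremum of the cardinalities of `ψ`-paths ending in `S`. -/
def aVal (S : ModuleCat.{0} A) : ℕ∞ :=
  sSup {d : ℕ∞ | ∃ m : ℕ, d = m ∧ PsiPathTo A m S}

/-- `a(A)`: the maximum of `a(S)` over the simple modules which are not `ψ`-cyclic. -/
def aAlg : ℕ∞ :=
  sSup {d : ℕ∞ | ∃ S : ModuleCat.{0} A, IsSimpleModule A ↥S ∧ aVal A S ≠ ⊤ ∧ aVal A S = d}

/-- `S` is a composition factor of `M`: a simple subquotient of `M`. -/
def IsCompFactorOf (S M : ModuleCat.{0} A) : Prop :=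
  IsSimpleModule A ↥S ∧ ∃ N' N : Submodule A ↥M, N' ≤ N ∧
    Nonempty ((↥N ⧸ N'.comap N.subtype) ≃ₗ[A] ↥S)

/-- `e(S) = min {pd S, pd (I S)} = x`. -/
def ERelVal (S : ModuleCat.{0} A) (x : ℕ∞) : Prop :=
  ∃ I, IsInjEnvOf A S I ∧ x = min (projDim A S) (projDim A I)

/-- `e*(S) = min {id S, id (P S)} = x`. -/
def EStarVal (S : ModuleCat.{0} A) (x : ℕ∞) : Prop :=
  ∃ P, IsProjCoverOf A S P ∧ x = min (injDim A S) (injDim A P)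

/-- `T = h(S) = top (Ω^{e(S)} N S)`, the homological permutation. -/
def HRel (S T : ModuleCat.{0} A) : Prop :=
  IsSimpleModule A ↥S ∧ IsSimpleModule A ↥T ∧
  ∃ z : ℕ, ERelVal A S z ∧
    ∃ N, ((Odd z ∧ N = S) ∨ (Even z ∧ IsInjEnvOf A S N)) ∧
      ∃ X, IsNthSyzygy A z N X ∧ IsSimpleTopOf A X T

/-- `S = h*(T) = soc (Σ^{e*(T)} N* T)`, the inverse homological permutation. -/
def HStarRel (T S : ModuleCat.{0} A) : Prop :=
  IsSimpleModule A ↥T ∧ IsSimpleModule A ↥S ∧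
  ∃ z : ℕ, EStarVal A T z ∧
    ∃ N, ((Odd z ∧ N = T) ∨ (Even z ∧ IsProjCoverOf A T N)) ∧
      ∃ X, IsNthCosyzygy A z N X ∧ IsSimpleSocOf A X S

/-- The `t`-fold relational iterate of a relation on modules (up to isomorphism). -/
def IterRel (r : ModuleCat.{0} A → ModuleCat.{0} A → Prop) :
    ℕ → ModuleCat.{0} A → ModuleCat.{0} A → Prop
  | 0, X, Y => Nonempty (X ≅ Y)
  | n + 1, X, Y => ∃ Z, r X Z ∧ IterRel r n Z Y

end ArtinAlg

/-!
Let `t, next t, next (next t), …` be the walk along which each indecomposable projective covers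
the radical of the preceding one, started at the projective cover `t` of `J = I S`. Uniserial
modules are intervals `[i, j)` of positions on it: `J = [0, s + 1)` and `S = [s, s + 1)`. If
`[i, F i)` is the projective cover of position `i`, the syzygy of `[i, j)` is `[j, F i)`, so the
successive endpoints are `i, j, F i, F j, …` and the projective dimension is read off from their
first repetition. For `S` and `J` these endpoints interlace as
`F^m 0 ≤ F^m s ≤ F^m (s + 1) ≤ F^(m + 1) 0`.
If the first equality is in the middle, `pd S` is odd; if it is on the right, `pd J` is even.

There must be such an equality. Let `ψ` be the partial map `U ↦ τ⁻ top (I U)` on simple modules, a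
finite set up to isomorphism. If all these inequalities were strict, then for large `m` the map
`ψ^m` would send the simples at the positions `F^m s` and `F^m (s + 1)` to those at `s` and at some
`z` with `s < z < F 0`, so these two simples are periodic points of `ψ`. Since `J` is injective, it
cannot be prolonged at its top, whence `ψ` sends both of them to the predecessor of `t`. As `ψ` is
injective on its periodic points, the two simples are equal; but the position of a simple is
determined by the length of its injective envelope, so `s = z`.
-/

universe u

section Endpoints

/-- The endpoints `i, j, F i, F j, F (F i), …`: if the projective cover of the interval module
`[i, j)` is `[i, F i)`, its `n`-th syzygy is `[endpoint F i j n, endpoint F i j (n + 1))`. -/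
def endpoint (F : ℕ → ℕ) (i j : ℕ) : ℕ → ℕ
  | 0 => i
  | 1 => j
  | n + 2 => F (endpoint F i j n)

/-- The endpoints increase strictly up to index `n + 1`, where they first repeat: the `n`-th
syzygy is the last nonzero one. -/
def StabilizesAt (F : ℕ → ℕ) (i j n : ℕ) : Prop :=
  (∀ k ≤ n, endpoint F i j k < endpoint F i j (k + 1)) ∧
    endpoint F i j (n + 1) = endpoint F i j (n + 2)

variable {F : ℕ → ℕ}

theorem endpoint_syzygy (i j n : ℕ) : endpoint F j (F i) n = endpoint F i j (n + 1) := by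
  induction n using Nat.twoStepInduction with
  | zero => rfl
  | one => rfl
  | more n ih _ => exact congrArg F ih

theorem endpoint_even (i j m : ℕ) : endpoint F i j (2 * m) = F^[m] i := by
  induction m with
  | zero => rfl
  | succ m ih => rw [Function.iterate_succ_apply', ← ih]; rfl

theorem endpoint_odd (i j m : ℕ) : endpoint F i j (2 * m + 1) = F^[m] j := by
  induction m with
  | zero => rfl
  | succ m ih => rw [Function.iterate_succ_apply', ← ih]; rfl

theorem StabilizesAt.syzygy {i j n : ℕ} (h : StabilizesAt F i j (n + 1)) :
    StabilizesAt F j (F i) n := by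
  simp only [StabilizesAt, endpoint_syzygy]
  exact ⟨fun k hk => h.1 (k + 1) (by lia), h.2⟩

theorem stabilizesAt_odd {i j m : ℕ} (hlt : ∀ l ≤ m, F^[l] i < F^[l] j ∧ F^[l] j < F^[l + 1] i)
    (heq : F^[m + 1] i = F^[m + 1] j) : StabilizesAt F i j (2 * m + 1) := by
  refine ⟨fun k hk => ?_, ?_⟩
  · obtain ⟨l, rfl | rfl⟩ := k.even_or_odd'
    · simpa only [endpoint_even, endpoint_odd] using (hlt l (by lia)).1
    · simpa only [endpoint_even, endpoint_odd, ← mul_add_one 2 l, add_assoc]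
        using (hlt l (by lia)).2
  · rwa [show 2 * m + 1 + 1 = 2 * (m + 1) from rfl,
      show 2 * m + 1 + 2 = 2 * (m + 1) + 1 from rfl, endpoint_even, endpoint_odd]

theorem stabilizesAt_even {i j m : ℕ} (hlt : ∀ l ≤ m, F^[l] i < F^[l] j)
    (hlt' : ∀ l < m, F^[l] j < F^[l + 1] i) (heq : F^[m] j = F^[m + 1] i) :
    StabilizesAt F i j (2 * m) := by
  refine ⟨fun k hk => ?_, ?_⟩
  · obtain ⟨l, rfl | rfl⟩ := k.even_or_odd'
    · simpa only [endpoint_even, endpoint_odd] using hlt l (by lia)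
    · simpa only [endpoint_even, endpoint_odd, ← mul_add_one 2 l, add_assoc]
        using hlt' l (by lia)
  · simpa only [endpoint_even, endpoint_odd, ← mul_add_one 2 m] using heq

theorem exists_stabilizesAt (hF : Monotone F) {s : ℕ} (hs : s + 1 ≤ F 0)
    (h : ¬ ∀ m, F^[m] s < F^[m] (s + 1) ∧ F^[m] (s + 1) < F^[m + 1] 0) :
    (∃ n, Odd n ∧ StabilizesAt F s (s + 1) n) ∨ ∃ n, Even n ∧ StabilizesAt F 0 (s + 1) n := by
  classical
  have hmono (m : ℕ) : Monotone F^[m] := hF.iterate m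
  push Not at h
  let m := Nat.find h
  have hlt (l : ℕ) (hl : l < m) : F^[l] s < F^[l] (s + 1) ∧ F^[l] (s + 1) < F^[l + 1] 0 := by
    simpa using Nat.find_min h hl
  have hm : F^[m] s < F^[m] (s + 1) → F^[m + 1] 0 ≤ F^[m] (s + 1) := Nat.find_spec h
  rcases (hmono m s.le_succ).eq_or_lt with heq | hlt_m
  · left
    rcases hp : m with _ | p
    · rw [hp] at heq; exact absurd heq s.lt_succ_self.ne
    · rw [hp] at hlt heq
      exact ⟨_, odd_two_mul_add_one p, stabilizesAt_odd (fun l hl => ⟨(hlt l (by lia)).1,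
        (hlt l (by lia)).2.trans_le (hmono _ s.zero_le)⟩) heq⟩
  · right
    refine ⟨_, even_two_mul m, stabilizesAt_even (fun l hl => ?_) (fun l hl => (hlt l hl).2)
      (le_antisymm (hmono m hs) (hm hlt_m))⟩
    refine (hmono l s.zero_le).trans_lt ?_
    rcases hl.lt_or_eq with hl | rfl
    exacts [(hlt l hl).1, hlt_m]

end Endpoints

theorem exists_iterate_mem_periodicPts {α : Type*} [Finite α] (f : α → α) :
    ∃ n, ∀ x, f^[n] x ∈ Function.periodicPts f := by
  obtain ⟨a, b, hab, heq⟩ := Finite.exists_ne_map_eq_of_infinite (fun n : ℕ => f^[n])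
  wlog hlt : a < b generalizing a b
  · exact this b a hab.symm heq.symm (by lia)
  refine ⟨a, fun x => Function.mk_mem_periodicPts (n := b - a) (by lia) ?_⟩
  rw [Function.IsPeriodicPt, Function.IsFixedPt, ← Function.iterate_add_apply,
    Nat.sub_add_cancel hlt.le]
  exact (congrFun heq x).symm

/-- The combinatorial data of a Nakayama algebra. The nonzero elements of `V` are the
indecomposable projectives `P`, `0` is the zero module, `next` sends `P` to the projective cover
of `rad P` and `len` is the composition length. -/
structure KupischSystem (V : Type*) [Zero V] where
  next : V → V
  len : V → ℕ
  next_zero : next 0 = 0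
  len_eq_zero_iff (v : V) : len v = 0 ↔ v = 0
  len_le (v : V) : len v ≤ len (next v) + 1
  next_injOn (v w : V) : next v = next w → next v ≠ 0 → v = w

namespace KupischSystem

variable {V : Type*} [Zero V] (K : KupischSystem V)

theorem iterate_next_ne_zero_of_le {v : V} {i j : ℕ} (hij : i ≤ j) (h : K.next^[j] v ≠ 0) :
    K.next^[i] v ≠ 0 := by
  obtain ⟨d, rfl⟩ := Nat.exists_eq_add_of_le' hij
  rw [Function.iterate_add_apply] at h
  intro h0
  exact h (by rw [h0, Function.iterate_fixed K.next_zero])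

theorem len_le_len_iterate_next_add (k : ℕ) (v : V) : K.len v ≤ K.len (K.next^[k] v) + k := by
  induction k generalizing v with
  | zero => rfl
  | succ k ih =>
    have h := K.len_le v
    have h' := ih (K.next v)
    rw [Function.iterate_succ_apply]
    lia

theorem iterate_next_injOn {k : ℕ} {v w : V} (h : K.next^[k] v = K.next^[k] w)
    (h0 : K.next^[k] v ≠ 0) : v = w := by
  induction k with
  | zero => exact h
  | succ k ih =>
    have hv := K.iterate_next_ne_zero_of_le k.le_succ h0
    simp only [Function.iterate_succ_apply'] at h h0
    exact ih (K.next_injOn _ _ h h0) hv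

/-- On the walk `t, next t, next (next t), …`, the composition factors of the projective that
starts at position `i` occupy the positions in `[i, projEnd t i)`. -/
def projEnd (t : V) (i : ℕ) : ℕ := i + K.len (K.next^[i] t)

theorem le_projEnd (t : V) (i : ℕ) : i ≤ K.projEnd t i := i.le_add_right _

theorem lt_projEnd_iff {t : V} {i : ℕ} : i < K.projEnd t i ↔ K.next^[i] t ≠ 0 := by
  rw [projEnd, Nat.lt_add_right_iff_pos, Nat.pos_iff_ne_zero, ne_eq, K.len_eq_zero_iff]

theorem projEnd_mono (t : V) : Monotone (K.projEnd t) := by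
  refine monotone_nat_of_le_succ fun i => ?_
  have h := K.len_le (K.next^[i] t)
  rw [projEnd, projEnd, Function.iterate_succ_apply']
  lia

theorem projEnd_iterate_next (t : V) (x i : ℕ) :
    K.projEnd (K.next^[x] t) i + x = K.projEnd t (i + x) := by
  rw [projEnd, projEnd, Function.iterate_add_apply]
  lia

/-- `w = ψ v`, i.e. `w` is the inverse Auslander–Reiten translate of the top of the injective
envelope of `v`, where `v` sits at position `k` of the walk from `w`. -/
def IsPsi (v w : V) (k : ℕ) : Prop :=
  K.next^[k] w = v ∧ K.projEnd w 0 ≤ k ∧ k < K.projEnd w 1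

variable {K}

theorem IsPsi.unique {v w w' : V} {k k' : ℕ} (hv : v ≠ 0) (h : K.IsPsi v w k)
    (h' : K.IsPsi v w' k') : w = w' ∧ k = k' := by
  wlog hk : k ≤ k' generalizing w w' k k'
  · exact (this h' h (by lia)).imp Eq.symm Eq.symm
  obtain ⟨d, rfl⟩ := Nat.exists_eq_add_of_le hk
  obtain ⟨rfl, hlen, -⟩ := h
  obtain ⟨heq, -, hlt⟩ := h'
  rw [Function.iterate_add_apply] at heq
  obtain rfl : K.next^[d] w' = w := K.iterate_next_injOn heq (heq ▸ hv)
  obtain _ | d := d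
  · exact ⟨rfl, rfl⟩
  · have h₁ := K.projEnd_iterate_next w' (d + 1) 0
    have h₂ := K.projEnd_mono w' (show 1 ≤ 0 + (d + 1) by lia)
    lia

variable (K)

open Classical in
/-- The map `ψ = τ⁻ top I`, with value `0` at `0` and wherever it is not defined. -/
def psi (v : V) : V :=
  if h : v ≠ 0 ∧ ∃ w k, K.IsPsi v w k then h.2.choose else 0

theorem psi_zero : K.psi 0 = 0 := dif_neg fun h => h.1 rfl

variable {K}

theorem exists_isPsi_of_psi_ne_zero {v : V} (h : K.psi v ≠ 0) : ∃ k, K.IsPsi v (K.psi v) k := by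
  unfold psi at h ⊢
  split_ifs at h ⊢ with hv
  · exact hv.2.choose_spec
  · exact absurd rfl h

theorem IsPsi.psi_eq {v w : V} {k : ℕ} (hv : v ≠ 0) (h : K.IsPsi v w k) : K.psi v = w := by
  have hex : v ≠ 0 ∧ ∃ w k, K.IsPsi v w k := ⟨hv, w, k, h⟩
  rw [psi, dif_pos hex]
  exact (hex.2.choose_spec.choose_spec.unique hv h).1

theorem psi_ne_zero_of_mem_periodicPts {v : V} (hv : v ≠ 0)
    (h : v ∈ Function.periodicPts K.psi) : K.psi v ≠ 0 := by
  obtain ⟨n, hn, hper⟩ := h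
  intro h0
  obtain _ | n := n
  · exact lt_irrefl 0 hn
  · refine hv (hper.symm.trans ?_)
    rw [Function.iterate_succ_apply, h0, Function.iterate_fixed K.psi_zero]

theorem exists_psi_iterate_next {t : V} {a b y : ℕ} (ha : K.projEnd t a ≤ y)
    (hb : y < K.projEnd t b) (hy : K.next^[y] t ≠ 0) :
    ∃ z, a ≤ z ∧ z < b ∧ z ≤ y ∧ K.psi (K.next^[y] t) = K.next^[z] t := by
  classical
  let z := Nat.findGreatest (fun x => K.projEnd t x ≤ y) y
  have hay : a ≤ y := (K.le_projEnd t a).trans ha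
  have hz : K.projEnd t z ≤ y := Nat.findGreatest_spec (P := fun x => K.projEnd t x ≤ y) hay ha
  have hz' : y < K.projEnd t (z + 1) := by
    by_contra! h
    exact (Nat.lt_succ_self z).not_ge
      (Nat.le_findGreatest (P := fun x => K.projEnd t x ≤ y) ((K.le_projEnd t _).trans h) h)
  have hzy : z ≤ y := (K.le_projEnd t z).trans hz
  have h₀ := K.projEnd_iterate_next t z 0
  have h₁ := K.projEnd_iterate_next t z 1
  rw [zero_add] at h₀
  rw [add_comm 1 z] at h₁
  refine ⟨z, Nat.le_findGreatest hay ha, ?_, hzy, IsPsi.psi_eq (k := y - z) hy ⟨?_, ?_, ?_⟩⟩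
  · by_contra! h
    exact absurd (K.projEnd_mono t h) (by lia)
  · rw [← Function.iterate_add_apply, Nat.sub_add_cancel hzy]
  · lia
  · lia

theorem exists_iterate_psi_iterate_next {t : V} {m a b y : ℕ} (ha : (K.projEnd t)^[m] a ≤ y)
    (hb : y < (K.projEnd t)^[m] b) (hy : K.next^[y] t ≠ 0) :
    ∃ z, a ≤ z ∧ z < b ∧ K.psi^[m] (K.next^[y] t) = K.next^[z] t := by
  induction m generalizing y with
  | zero => exact ⟨y, ha, hb, rfl⟩
  | succ m ih =>
    rw [Function.iterate_succ_apply'] at ha hb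
    obtain ⟨x, hax, hxb, hxy, hx⟩ := exists_psi_iterate_next ha hb hy
    rw [Function.iterate_succ_apply, hx]
    exact ih hax hxb (K.iterate_next_ne_zero_of_le hxy hy)

/-- The last hypothesis says that the module `[0, s + 1)` on the walk from `t` cannot be prolonged
at its top, as is the case if it is injective. -/
theorem next_eq_of_isPsi {t w : V} {s k : ℕ} (h : K.IsPsi (K.next^[s] t) w k)
    (hs : s < K.len t) (hmax : ∀ u, K.next u = t → K.len u ≤ s + 1) :
    K.next w = t ∧ k = s + 1 := by
  obtain ⟨hw, hlen, hlt⟩ := h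
  rw [projEnd, zero_add, Function.iterate_zero_apply] at hlen
  have hne : K.next^[s] t ≠ 0 := K.lt_projEnd_iff.1 <|
    hs.trans_le ((K.len_le_len_iterate_next_add s t).trans_eq (add_comm _ _))
  rcases le_or_gt k s with hks | hks
  · obtain ⟨d, rfl⟩ := Nat.exists_eq_add_of_le hks
    rw [Function.iterate_add_apply] at hw hne
    obtain rfl := K.iterate_next_injOn hw.symm hne
    have := K.len_le_len_iterate_next_add d t
    lia
  · obtain ⟨d, rfl⟩ := Nat.exists_eq_add_of_lt hks
    rw [add_assoc, Function.iterate_add_apply] at hw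
    have ht : K.next^[d + 1] w = t := (K.iterate_next_injOn hw.symm hne).symm
    have hu := hmax (K.next^[d] w) (by rw [← ht, Function.iterate_succ_apply'])
    obtain _ | d := d
    · exact ⟨ht, rfl⟩
    · have : K.projEnd w 1 ≤ d + 1 + K.len (K.next^[d + 1] w) :=
        K.projEnd_mono w (Nat.le_add_left 1 d)
      lia

theorem not_forall_iterate_projEnd_lt [Finite V] {t : V} {s : ℕ} (hs : s < K.len t)
    (hmax : ∀ u, K.next u = t → K.len u ≤ s + 1) :
    ¬ ∀ m, (K.projEnd t)^[m] s < (K.projEnd t)^[m] (s + 1) ∧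
      (K.projEnd t)^[m] (s + 1) < (K.projEnd t)^[m + 1] 0 := by
  intro hlt
  obtain ⟨N, hN⟩ := exists_iterate_mem_periodicPts K.psi
  have hmem {x : ℕ} (hx : (K.projEnd t)^[N] x < (K.projEnd t)^[N + 1] x) :
      K.next^[(K.projEnd t)^[N] x] t ≠ 0 := by
    rwa [Function.iterate_succ_apply', lt_projEnd_iff] at hx
  have hmono := (K.projEnd_mono t).iterate
  obtain ⟨z, hsz, hzs, hz⟩ := exists_iterate_psi_iterate_next le_rfl (hlt N).1
    (hmem ((hlt N).1.trans ((hlt N).2.trans_le (hmono _ s.zero_le))))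
  obtain rfl : z = s := by lia
  obtain ⟨z', hsz', hz's, hz'⟩ := exists_iterate_psi_iterate_next (b := K.projEnd t 0) le_rfl
    (hlt N).2 (hmem ((hlt N).2.trans_le (hmono _ (Nat.zero_le _))))
  rw [projEnd, zero_add, Function.iterate_zero_apply] at hz's
  have hper : K.next^[z] t ∈ Function.periodicPts K.psi := hz ▸ hN _
  have hper' : K.next^[z'] t ∈ Function.periodicPts K.psi := hz' ▸ hN _
  have hne' : K.next^[z'] t ≠ 0 := K.lt_projEnd_iff.1 <|
    hz's.trans_le ((K.len_le_len_iterate_next_add z' t).trans_eq (add_comm _ _))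
  have hne : K.next^[z] t ≠ 0 := K.iterate_next_ne_zero_of_le (by lia) hne'
  obtain ⟨k, hk⟩ := exists_isPsi_of_psi_ne_zero (psi_ne_zero_of_mem_periodicPts hne hper)
  obtain ⟨hw, rfl⟩ := next_eq_of_isPsi hk hs hmax
  -- both periodic points are sent by `ψ` to the predecessor of `t`
  have hk' : K.IsPsi (K.next^[z'] t) (K.psi (K.next^[z] t)) (z' + 1) := by
    refine ⟨by rw [Function.iterate_succ_apply, hw], hk.2.1.trans (by lia), ?_⟩
    rw [projEnd, Function.iterate_one, hw]
    lia
  have heq : K.next^[z] t = K.next^[z'] t :=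
    (Function.bijOn_periodicPts K.psi).injOn hper hper' (hk'.psi_eq hne').symm
  rw [← heq] at hk'
  have := (hk.unique hne hk').2
  lia

theorem exists_stabilizesAt_projEnd [Finite V] {t : V} {s : ℕ} (hs : s < K.len t)
    (hmax : ∀ u, K.next u = t → K.len u ≤ s + 1) :
    (∃ n, Odd n ∧ StabilizesAt (K.projEnd t) s (s + 1) n) ∨
      ∃ n, Even n ∧ StabilizesAt (K.projEnd t) 0 (s + 1) n :=
  exists_stabilizesAt (K.projEnd_mono t) (hs.trans_eq (zero_add _).symm)
    (not_forall_iterate_projEnd_lt hs hmax)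

end KupischSystem

section Length

variable (R : Type*) [Ring R]

/-- The composition length of a module of finite length as a natural number; it is `0` for a
module of infinite length. -/
def natLength (M : Type*) [AddCommGroup M] [Module R M] : ℕ := (Module.length R M).toNat

variable {M : Type*} [AddCommGroup M] [Module R M]

theorem coe_natLength (M : Type*) [AddCommGroup M] [Module R M] [IsArtinian R M]
    [IsNoetherian R M] : (natLength R M : ℕ∞) = Module.length R M :=
  ENat.natCast_toNat Module.length_ne_top

variable {R}
variable {M' : Type*} [AddCommGroup M'] [Module R M']

theorem natLength_congr (e : M ≃ₗ[R] M') : natLength R M = natLength R M' :=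
  congrArg ENat.toNat e.length_eq

variable [IsArtinian R M] [IsNoetherian R M]

theorem natLength_ker_add_natLength {g : M →ₗ[R] M'} (hg : Function.Surjective g) :
    natLength R (LinearMap.ker g) + natLength R M' = natLength R M := by
  have := isArtinian_of_surjective M g hg
  have := isNoetherian_of_surjective g (LinearMap.range_eq_top.2 hg)
  have h := Module.length_eq_add_of_exact (LinearMap.ker g).subtype g
    (Submodule.subtype_injective _) hg (LinearMap.exact_subtype_ker_map g)
  simp only [← coe_natLength] at h
  exact_mod_cast h.symm

theorem natLength_le_of_surjective {g : M →ₗ[R] M'} (hg : Function.Surjective g) :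
    natLength R M' ≤ natLength R M :=
  (natLength_ker_add_natLength hg).le.trans' (Nat.le_add_left _ _)

theorem natLength_quotient_add_natLength (N : Submodule R M) :
    natLength R (M ⧸ N) + natLength R N = natLength R M := by
  rw [add_comm, ← natLength_ker_add_natLength N.mkQ_surjective, Submodule.ker_mkQ]

theorem natLength_le_of_injective {f : M' →ₗ[R] M} (hf : Function.Injective f) :
    natLength R M' ≤ natLength R M :=
  ENat.toNat_le_toNat (Module.length_le_of_injective f hf) Module.length_ne_top

theorem natLength_lt_of_ne_top {N : Submodule R M} (hN : N ≠ ⊤) :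
    natLength R N < natLength R M := by
  have h := Submodule.length_lt hN
  simp only [← coe_natLength] at h
  exact_mod_cast h

theorem eq_top_of_natLength_eq {N : Submodule R M} (h : natLength R N = natLength R M) : N = ⊤ :=
  of_not_not fun hN => (natLength_lt_of_ne_top hN).ne h

theorem eq_of_le_of_natLength_le {M : Type*} [AddCommGroup M] [Module R M] {N N' : Submodule R M}
    [IsArtinian R N'] [IsNoetherian R N'] (hle : N ≤ N') (h : natLength R N' ≤ natLength R N) :
    N = N' := by
  refine hle.antisymm (Submodule.comap_subtype_eq_top.1 (of_not_not fun hne => ?_))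
  have hlt := natLength_lt_of_ne_top hne
  rw [natLength_congr (Submodule.comapSubtypeEquivOfLe hle)] at hlt
  exact h.not_gt hlt

variable (R M) in
theorem natLength_eq_zero_iff : natLength R M = 0 ↔ Subsingleton M := by
  rw [← Module.length_eq_zero_iff (R := R), ← coe_natLength, Nat.cast_eq_zero]

variable (R M) in
theorem natLength_pos_iff : 0 < natLength R M ↔ Nontrivial M := by
  rw [Nat.pos_iff_ne_zero, ne_eq, natLength_eq_zero_iff, not_subsingleton_iff_nontrivial]

variable (R M) in
theorem natLength_eq_one_iff : natLength R M = 1 ↔ IsSimpleModule R M := by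
  rw [← Module.length_eq_one_iff, ← coe_natLength, Nat.cast_eq_one]

variable (R M) in
theorem exists_submodule_natLength_eq {k : ℕ} (hk : k ≤ natLength R M) :
    ∃ N : Submodule R M, natLength R N = k := by
  induction k with
  | zero => exact ⟨⊥, (natLength_eq_zero_iff R _).2 inferInstance⟩
  | succ k ih =>
    obtain ⟨N, rfl⟩ := ih (k.le_succ.trans hk)
    have hN : N ≠ ⊤ := by
      rintro rfl
      rw [natLength_congr Submodule.topEquiv] at hk
      lia
    obtain ⟨N', hNN'⟩ := exists_covBy_of_wellFoundedLT (α := Submodule R M)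
      (not_isMax_iff_ne_top.2 hN)
    have hsimple := (covBy_iff_quot_is_simple hNN'.le).1 hNN'
    refine ⟨N', ?_⟩
    rw [← natLength_quotient_add_natLength (N.comap N'.subtype),
      (natLength_eq_one_iff R _).2 hsimple, add_comm,
      natLength_congr (Submodule.comapSubtypeEquivOfLe hNN'.le)]

end Length

/-- A module is uniserial if its submodules form a chain. -/
class IsUniserialModule (R M : Type*) [Ring R] [AddCommGroup M] [Module R M] : Prop where
  le_total (N₁ N₂ : Submodule R M) : N₁ ≤ N₂ ∨ N₂ ≤ N₁

namespace IsUniserialModule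

variable {R M M' T : Type*} [Ring R] [AddCommGroup M] [Module R M] [AddCommGroup M'] [Module R M']
  [AddCommGroup T] [Module R T]

theorem of_injective [IsUniserialModule R M] {f : M' →ₗ[R] M} (hf : Function.Injective f) :
    IsUniserialModule R M' where
  le_total N₁ N₂ := by
    rw [← Submodule.map_le_map_iff_of_injective hf, ← Submodule.map_le_map_iff_of_injective hf]
    exact le_total _ _

theorem of_surjective [IsUniserialModule R M] {f : M →ₗ[R] M'} (hf : Function.Surjective f) :
    IsUniserialModule R M' where
  le_total N₁ N₂ := by
    rw [← Submodule.comap_le_comap_iff_of_surjective hf,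
      ← Submodule.comap_le_comap_iff_of_surjective hf]
    exact le_total _ _

instance [IsUniserialModule R M] (N : Submodule R M) : IsUniserialModule R N :=
  of_injective N.subtype_injective

instance [IsUniserialModule R M] (N : Submodule R M) : IsUniserialModule R (M ⧸ N) :=
  of_surjective N.mkQ_surjective

instance [Subsingleton M] : IsUniserialModule R M where
  le_total N₁ N₂ := .inl (Subsingleton.elim N₁ N₂).le

theorem injective_of_comp [IsUniserialModule R M] [Nontrivial T] {i : T →ₗ[R] M}
    {f : M →ₗ[R] M'} (h : Function.Injective (f ∘ₗ i)) : Function.Injective f := by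
  rw [← LinearMap.ker_eq_bot, eq_bot_iff]
  rcases le_total (LinearMap.ker f) (LinearMap.range i) with hle | hle
  · intro x hx
    obtain ⟨y, rfl⟩ := hle hx
    rw [h (a₁ := y) (a₂ := 0) (by simpa using hx), map_zero]
    exact zero_mem _
  · rw [LinearMap.range_le_ker_iff.1 hle] at h
    obtain ⟨x, y, hxy⟩ := exists_pair_ne T
    exact absurd (h (a₁ := x) (a₂ := y) rfl) hxy

theorem surjective_of_comp [IsUniserialModule R M] [Nontrivial T] {f : M' →ₗ[R] M}
    {g : M →ₗ[R] T} (h : Function.Surjective (g ∘ₗ f)) : Function.Surjective f := by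
  rw [← LinearMap.range_eq_top] at h ⊢
  have hsup : LinearMap.range f ⊔ LinearMap.ker g = ⊤ := by
    rw [← Submodule.comap_map_eq, ← LinearMap.range_comp, h, Submodule.comap_top]
  rcases le_total (LinearMap.range f) (LinearMap.ker g) with hle | hle
  · rw [LinearMap.range_comp, LinearMap.le_ker_iff_map.1 hle] at h
    exact absurd h bot_ne_top
  · rwa [sup_eq_left.2 hle] at hsup

theorem injective_of_projective [IsUniserialModule R M] [Nontrivial T] [Module.Projective R T]
    {g : M →ₗ[R] T} (hg : Function.Surjective g) : Function.Injective g := by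
  obtain ⟨i, hi⟩ := Module.projective_lifting_property g LinearMap.id hg
  exact injective_of_comp (i := i) (by rw [hi]; exact Function.injective_id)

theorem exists_injective_extension {R : Type*} {M M' T : Type u} [Ring R]
    [AddCommGroup M] [Module R M] [AddCommGroup M'] [Module R M'] [AddCommGroup T] [Module R T]
    [IsUniserialModule R M] [Nontrivial T] (hM' : Module.Injective R M')
    {i : T →ₗ[R] M} (hi : Function.Injective i) {e : T →ₗ[R] M'} (he : Function.Injective e) :
    ∃ f : M →ₗ[R] M', Function.Injective f ∧ f ∘ₗ i = e := by
  obtain ⟨f, hf⟩ := hM'.out i hi e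
  have hfi : f ∘ₗ i = e := LinearMap.ext hf
  exact ⟨f, injective_of_comp (i := i) (hfi ▸ he), hfi⟩

theorem le_jacobson [IsUniserialModule R M] {N : Submodule R M} (hN : N ≠ ⊤) :
    N ≤ Module.jacobson R M :=
  le_sInf fun _ hK => (le_total _ _).elim id fun h => ((hK.le_iff.1 h).resolve_left hN).le

theorem isCoatom_jacobson [IsUniserialModule R M] [Module.Finite R M] [Nontrivial M] :
    IsCoatom (Module.jacobson R M) :=
  ⟨(Module.jacobson_lt_top R M).ne, fun _ hlt => of_not_not fun hN => (le_jacobson hN).not_gt hlt⟩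

theorem map_jacobson [IsUniserialModule R M] [Nontrivial M'] {g : M →ₗ[R] M'}
    (hg : Function.Surjective g) : (Module.jacobson R M).map g = Module.jacobson R M' :=
  Module.map_jacobson_of_ker_le hg <| le_jacobson fun h => by
    rw [LinearMap.ker_eq_top.1 h] at hg
    exact not_subsingleton M' (subsingleton_of_forall_eq 0 fun x => (hg x).choose_spec.symm)

section FiniteLength

variable (R M) in
theorem natLength_jacobson [IsUniserialModule R M] [IsArtinian R M] [IsNoetherian R M] :
    natLength R (Module.jacobson R M) = natLength R M - 1 := by
  rcases subsingleton_or_nontrivial M with h | h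
  · rw [(natLength_eq_zero_iff R M).2 h, (natLength_eq_zero_iff R _).2 inferInstance]
  · have := isSimpleModule_iff_isCoatom.2 (isCoatom_jacobson (R := R) (M := M))
    rw [← natLength_quotient_add_natLength (Module.jacobson R M),
      (natLength_eq_one_iff R _).2 this, Nat.add_sub_cancel_left]

theorem le_of_natLength_le [IsUniserialModule R M] [IsArtinian R M] [IsNoetherian R M]
    {N N' : Submodule R M} (h : natLength R N ≤ natLength R N') : N ≤ N' :=
  (le_total N N').elim id fun hle => (eq_of_le_of_natLength_le hle h).ge

theorem eq_of_natLength_eq [IsUniserialModule R M] [IsArtinian R M] [IsNoetherian R M]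
    {N N' : Submodule R M} (h : natLength R N = natLength R N') : N = N' :=
  (le_of_natLength_le h.le).antisymm (le_of_natLength_le h.ge)

theorem nonempty_equiv_of_surjective [IsUniserialModule R M] [IsArtinian R M] [IsNoetherian R M]
    {g : M →ₗ[R] M'} (hg : Function.Surjective g) {g' : M →ₗ[R] T} (hg' : Function.Surjective g')
    (h : natLength R M' = natLength R T) : Nonempty (M' ≃ₗ[R] T) := by
  have hker : LinearMap.ker g = LinearMap.ker g' := eq_of_natLength_eq <| by
    have := natLength_ker_add_natLength hg
    have := natLength_ker_add_natLength hg'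
    lia
  exact ⟨(g.quotKerEquivOfSurjective hg).symm ≪≫ₗ Submodule.quotEquivOfEq _ _ hker ≪≫ₗ
    g'.quotKerEquivOfSurjective hg'⟩

theorem nonempty_equiv_of_injective [IsUniserialModule R M] [IsArtinian R M] [IsNoetherian R M]
    {f : M' →ₗ[R] M} (hf : Function.Injective f) {f' : T →ₗ[R] M} (hf' : Function.Injective f')
    (h : natLength R M' = natLength R T) : Nonempty (M' ≃ₗ[R] T) := by
  let e := LinearEquiv.ofInjective f hf
  let e' := LinearEquiv.ofInjective f' hf'
  have hrange : LinearMap.range f = LinearMap.range f' := eq_of_natLength_eq <| by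
    rw [← natLength_congr e, h, natLength_congr e']
  exact ⟨e ≪≫ₗ LinearEquiv.ofEq _ _ hrange ≪≫ₗ e'.symm⟩

end FiniteLength

variable (R M) in
theorem finite [IsArtinianRing R] [IsUniserialModule R M] : Module.Finite R M := by
  -- the lengths of cyclic submodules are bounded by that of `R`; a longest one is everything
  have hbound (x : M) : natLength R (Submodule.span R {x}) ≤ natLength R R := by
    rw [LinearMap.span_singleton_eq_range]
    exact natLength_le_of_surjective (LinearMap.surjective_rangeRestrict _)
  obtain ⟨x, hx⟩ : ∃ x : M, ∀ y : M,
      natLength R R - natLength R (Submodule.span R {x}) ≤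
        natLength R R - natLength R (Submodule.span R {y}) :=
    ⟨Function.argmin _, fun y => Function.argmin_le (fun x : M =>
      natLength R R - natLength R (Submodule.span R {x})) y⟩
  refine ⟨⟨{x}, ?_⟩⟩
  rw [Finset.coe_singleton, eq_top_iff]
  intro y _
  have hxy : Submodule.span R {y} ≤ Submodule.span R {x} := by
    refine (le_total _ _).elim id fun hle => (eq_of_le_of_natLength_le hle ?_).ge
    have := hbound x
    have := hbound y
    have := hx y
    lia
  exact hxy (Submodule.mem_span_singleton_self y)

end IsUniserialModule

section Submodule

variable {R M : Type*} [Ring R] [AddCommGroup M] [Module R M]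

theorem exists_maximal_notMem {x : M} (hx : x ≠ 0) :
    ∃ C : Submodule R M, Maximal (x ∉ ·) C := by
  refine zorn_le₀ {C : Submodule R M | x ∉ C} fun c hc hchain => ?_
  rcases c.eq_empty_or_nonempty with rfl | hne
  · exact ⟨⊥, by simpa using hx, by simp⟩
  · refine ⟨sSup c, fun hmem => ?_, fun _ => le_sSup⟩
    obtain ⟨C, hC, hxC⟩ := (Submodule.mem_sSup_of_directed hne hchain.directedOn).1 hmem
    exact hc hC hxC

theorem projective_of_isCompl [Module.Projective R M] {N N' : Submodule R M} (h : IsCompl N N') :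
    Module.Projective R N :=
  .of_split N.subtype (N.projectionOnto N' h) (LinearMap.ext fun _ => by simp)

theorem surjective_comp_subtype_or_of_isCompl {S : Type*} [AddCommGroup S] [Module R S]
    [IsSimpleModule R S]
    {g : M →ₗ[R] S} (hg : Function.Surjective g) {N N' : Submodule R M} (h : IsCompl N N') :
    Function.Surjective (g ∘ₗ N.subtype) ∨ Function.Surjective (g ∘ₗ N'.subtype) := by
  by_contra! hne
  have hle {K : Submodule R M} (hK : ¬ Function.Surjective (g ∘ₗ K.subtype)) :
      K ≤ LinearMap.ker g := by
    have := (LinearMap.surjective_or_eq_zero _).resolve_left hK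
    simpa [← LinearMap.range_le_ker_iff] using this
  have htop := sup_le (hle hne.1) (hle hne.2)
  rw [h.sup_eq_top, top_le_iff, LinearMap.ker_eq_top] at htop
  have := IsSimpleModule.nontrivial R S
  obtain ⟨x, hx⟩ := exists_ne (0 : S)
  obtain ⟨y, rfl⟩ := hg x
  exact hx (LinearMap.congr_fun htop y)

end Submodule

namespace ArtinAlg

section Nakayama

variable {A : Type} [Ring A] (hNak : IsNakayama A)
include hNak

theorem IsNakayama.isUniserialModule_of_forall_le {M : Type} [AddCommGroup M] [Module A M]
    {B : Submodule A M} (hB : B ≠ ⊥) (hle : ∀ N : Submodule A M, N ≠ ⊥ → B ≤ N) :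
    IsUniserialModule A M := by
  refine ⟨fun N₁ N₂ => ?_⟩
  by_contra! hincomparable
  obtain ⟨x, hx₁, hx₂⟩ := SetLike.not_le_iff_exists.1 hincomparable.1
  obtain ⟨y, hy₂, hy₁⟩ := SetLike.not_le_iff_exists.1 hincomparable.2
  let L := Submodule.span A {x, y}
  have hxL : x ∈ L := Submodule.subset_span (by simp)
  have hyL : y ∈ L := Submodule.subset_span (by simp)
  have hB_le_map {N : Submodule A L} (hN : N ≠ ⊥) : B ≤ N.map L.subtype :=
    hle _ fun h => hN (Submodule.map_injective_of_injective L.subtype_injective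
      (h.trans (Submodule.map_bot _).symm))
  have hindec : Indec A (ModuleCat.of A L) := by
    refine ⟨⟨⟨x, hxL⟩, 0, fun h => hx₂ ?_⟩, fun N N' hcompl => ?_⟩
    · rw [show x = 0 from congrArg Subtype.val h]
      exact zero_mem _
    · by_contra! h
      have hinf := le_inf (hB_le_map h.1) (hB_le_map h.2)
      rw [← Submodule.map_inf _ L.subtype_injective, hcompl.inf_eq_bot, Submodule.map_bot] at hinf
      exact hB (le_bot_iff.1 hinf)
  rcases hNak (ModuleCat.of A L) (Module.Finite.span_of_finite A (Set.toFinite _)) hindec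
    (N₁.comap L.subtype) (N₂.comap L.subtype) with hle | hle
  · exact hx₂ (@hle ⟨x, hxL⟩ hx₁)
  · exact hy₁ (@hle ⟨y, hyL⟩ hy₂)

theorem IsNakayama.isUniserialModule_quotient_of_maximal {M : Type} [AddCommGroup M] [Module A M]
    {x : M} {C : Submodule A M} (hC : Maximal (x ∉ ·) C) : IsUniserialModule A (M ⧸ C) := by
  refine hNak.isUniserialModule_of_forall_le (B := Submodule.span A {C.mkQ x}) ?_ fun N hN => ?_
  · simpa using hC.prop
  · rw [Submodule.span_singleton_le_iff_mem, ← Submodule.mem_comap]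
    by_contra hx
    refine hN (le_bot_iff.1 ?_)
    rw [← Submodule.map_comap_eq_of_surjective C.mkQ_surjective N, Submodule.map_le_iff_le_comap,
      Submodule.comap_bot, Submodule.ker_mkQ]
    exact hC.le_of_ge hx (C.le_comap_mkQ N)

theorem IsNakayama.exists_uniserial_extension (T : Type) [AddCommGroup T] [Module A T]
    [IsSimpleModule A T] :
    ∃ (U : Type) (_ : AddCommGroup U) (_ : Module A U), IsUniserialModule A U ∧
      ∀ {M : Type} [AddCommGroup M] [Module A M] [IsUniserialModule A M] {i : T →ₗ[A] M},
        Function.Injective i → ∃ f : M →ₗ[A] U, Function.Injective f := by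
  have : Nontrivial T := IsSimpleModule.nontrivial A T
  let E := CategoryTheory.Injective.under (ModuleCat.of A T)
  let e : T →ₗ[A] E := (CategoryTheory.Injective.ι (ModuleCat.of A T)).hom
  have hE : Module.Injective A E :=
    (Module.injective_iff_injective_object A E).2 (CategoryTheory.Injective.injective_under _)
  have he : Function.Injective e := (ModuleCat.mono_iff_injective _).1 inferInstance
  obtain ⟨x, hx⟩ := exists_ne (0 : T)
  obtain ⟨C, hC⟩ := exists_maximal_notMem (R := A) ((map_ne_zero_iff e he).2 hx)
  refine ⟨E ⧸ C, inferInstance, inferInstance, hNak.isUniserialModule_quotient_of_maximal hC,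
    fun {M} _ _ _ i hi => ?_⟩
  obtain ⟨f, -, hf⟩ := IsUniserialModule.exists_injective_extension hE hi he
  refine ⟨C.mkQ ∘ₗ f, IsUniserialModule.injective_of_comp (i := i) ?_⟩
  rw [LinearMap.comp_assoc, hf]
  refine (LinearMap.injective_or_eq_zero _).resolve_right fun h => hC.prop ?_
  simpa using LinearMap.congr_fun h x

theorem IsNakayama.nonempty_equiv_of_simple_injective [IsArtinianRing A] {T M M' : Type}
    [AddCommGroup T] [Module A T] [IsSimpleModule A T]
    [AddCommGroup M] [Module A M] [IsUniserialModule A M]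
    [AddCommGroup M'] [Module A M'] [IsUniserialModule A M']
    {i : T →ₗ[A] M} (hi : Function.Injective i) {i' : T →ₗ[A] M'} (hi' : Function.Injective i')
    (h : natLength A M = natLength A M') : Nonempty (M ≃ₗ[A] M') := by
  obtain ⟨U, _, _, _, hU⟩ := hNak.exists_uniserial_extension T
  obtain ⟨f, hf⟩ := hU hi
  obtain ⟨f', hf'⟩ := hU hi'
  have := IsUniserialModule.finite A U
  exact IsUniserialModule.nonempty_equiv_of_injective hf hf' h

theorem IsNakayama.exists_uniserial_projective_surjective_simple [IsArtinianRing A] (S : Type)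
    [AddCommGroup S] [Module A S] [IsSimpleModule A S] :
    ∃ P : Submodule A A, Module.Projective A P ∧ IsUniserialModule A P ∧
      ∃ g : P →ₗ[A] S, Function.Surjective g := by
  have := IsSimpleModule.nontrivial A S
  let IsCover (P : Submodule A A) : Prop :=
    Module.Projective A P ∧ ∃ g : P →ₗ[A] S, Function.Surjective g
  have htop : IsCover ⊤ := by
    obtain ⟨x, hx⟩ := exists_ne (0 : S)
    exact ⟨.of_equiv Submodule.topEquiv.symm, LinearMap.toSpanSingleton A S x ∘ₗ
      Submodule.topEquiv.toLinearMap,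
      (IsSimpleModule.toSpanSingleton_surjective A hx).comp Submodule.topEquiv.surjective⟩
  obtain ⟨P, hP⟩ := exists_minimal_of_wellFoundedLT IsCover ⟨⊤, htop⟩
  obtain ⟨hproj, g, hg⟩ := hP.prop
  have eq_bot {N N' : Submodule A P} (h : IsCompl N N')
      (hN : Function.Surjective (g ∘ₗ N.subtype)) : N' = ⊥ := by
    have := projective_of_isCompl h
    let e := N.equivMapOfInjective P.subtype P.subtype_injective
    have hcover : IsCover (N.map P.subtype) :=
      ⟨.of_equiv e, (g ∘ₗ N.subtype) ∘ₗ e.symm.toLinearMap, hN.comp e.symm.surjective⟩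
    have htop : N = ⊤ := eq_top_iff.2 fun x _ => by
      obtain ⟨y, hy, hyx⟩ := hP.le_of_le hcover (Submodule.map_subtype_le P N) x.2
      rwa [← Subtype.ext hyx]
    exact eq_bot_of_top_isCompl (htop ▸ h)
  have hindec : Indec A (ModuleCat.of A P) :=
    ⟨hg.nontrivial, fun N N' h => (surjective_comp_subtype_or_of_isCompl hg h).symm.imp
      (eq_bot h.symm) (eq_bot h)⟩
  exact ⟨P, hproj, ⟨hNak (ModuleCat.of A P) inferInstance hindec⟩, g, hg⟩

theorem IsNakayama.exists_uniserial_projective_surjective [IsArtinianRing A] (M : Type)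
    [AddCommGroup M] [Module A M] [IsUniserialModule A M] [Nontrivial M] :
    ∃ P : Submodule A A, Module.Projective A P ∧ IsUniserialModule A P ∧
      ∃ g : P →ₗ[A] M, Function.Surjective g := by
  have := IsUniserialModule.finite A M
  have : IsSimpleModule A (M ⧸ Module.jacobson A M) :=
    isSimpleModule_iff_isCoatom.2 IsUniserialModule.isCoatom_jacobson
  obtain ⟨P, hP, hP', g, hg⟩ :=
    hNak.exists_uniserial_projective_surjective_simple (M ⧸ Module.jacobson A M)
  obtain ⟨f, hf⟩ := Module.projective_lifting_property (Module.jacobson A M).mkQ g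
    (Submodule.mkQ_surjective _)
  have := IsSimpleModule.nontrivial A (M ⧸ Module.jacobson A M)
  exact ⟨P, hP, hP', f, IsUniserialModule.surjective_of_comp (hf ▸ hg)⟩

end Nakayama

end ArtinAlg

theorem exists_finite_simple_representatives (R : Type u) [Ring R] [IsArtinianRing R] :
    ∃ (ι : Type u) (_ : Finite ι) (S : ι → Submodule R (R ⧸ Module.jacobson R R)),
      ∀ (T : Type u) [AddCommGroup T] [Module R T] [IsSimpleModule R T],
        ∃ i, Nonempty (S i ≃ₗ[R] T) := by
  let M := R ⧸ Module.jacobson R R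
  have : IsSemisimpleModule R M :=
    (IsArtinian.isSemisimpleModule_iff_jacobson R M).2 (Module.jacobson_quotient_jacobson R R)
  refine ⟨isotypicComponents R M, inferInstance, fun c => c.2.choose, fun T _ _ _ => ?_⟩
  have := IsSimpleModule.nontrivial R T
  obtain ⟨x, hx⟩ := exists_ne (0 : T)
  let f : M →ₗ[R] T := (Module.jacobson R R).liftQ (LinearMap.toSpanSingleton R T x)
    (IsSemisimpleModule.jacobson_le_ker R R R T _)
  have hf : Function.Surjective f := (Submodule.range_liftQ _ _ _).trans
    (LinearMap.range_eq_top.2 (IsSimpleModule.toSpanSingleton_surjective R hx))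
    |> LinearMap.range_eq_top.1
  obtain ⟨N, ⟨e⟩⟩ := IsSemisimpleModule.exists_submodule_linearEquiv_quotient (LinearMap.ker f)
  let e' : N ≃ₗ[R] T := e ≪≫ₗ f.quotKerEquivOfSurjective hf
  have : IsSimpleModule R N := .congr e'
  let c : isotypicComponents R M := ⟨isotypicComponent R M N, N, this, rfl⟩
  obtain ⟨_, hc⟩ := c.2.choose_spec
  obtain ⟨e''⟩ := isIsotypicOfType_submodule_iff.1
    (.isotypicComponent R M c.2.choose) N (N.le_isotypicComponent.trans hc.le)
  exact ⟨c, ⟨e''.symm ≪≫ₗ e'⟩⟩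

namespace ArtinAlg

variable (A : Type) [Ring A]

/-- Isomorphism of uniserial projective left ideals. -/
def uniserialProjectiveSetoid :
    Setoid {P : Submodule A A // Module.Projective A P ∧ IsUniserialModule A P} where
  r P Q := Nonempty (P.1 ≃ₗ[A] Q.1)
  iseqv := ⟨fun _ => ⟨.refl _ _⟩, fun ⟨e⟩ => ⟨e.symm⟩, fun ⟨e⟩ ⟨e'⟩ => ⟨e ≪≫ₗ e'⟩⟩

/-- The vertices of the Kupisch system of `A`: isomorphism classes of uniserial projective left
ideals. Over a Nakayama algebra the nonzero classes correspond to the simple modules. -/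
def Vertex : Type := Quotient (uniserialProjectiveSetoid A)

namespace Vertex

variable {A}

/-- A left ideal representing the vertex `v`. -/
def proj (v : Vertex A) : Submodule A A := (Quotient.out v).1

instance (v : Vertex A) : Module.Projective A v.proj := (Quotient.out v).2.1

instance (v : Vertex A) : IsUniserialModule A v.proj := (Quotient.out v).2.2

theorem ext_equiv {v w : Vertex A} (e : v.proj ≃ₗ[A] w.proj) : v = w :=
  (Quotient.out_equiv_out (s := uniserialProjectiveSetoid A)).1 ⟨e⟩

theorem exists_proj_equiv (P : Submodule A A) [hP : Module.Projective A P]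
    [hP' : IsUniserialModule A P] : ∃ v : Vertex A, Nonempty (v.proj ≃ₗ[A] P) :=
  ⟨Quotient.mk _ ⟨P, hP, hP'⟩, Quotient.mk_out (s := uniserialProjectiveSetoid A) ⟨P, hP, hP'⟩⟩

instance : Zero (Vertex A) := ⟨(exists_proj_equiv ⊥).choose⟩

theorem eq_zero_iff {v : Vertex A} : v = 0 ↔ Subsingleton v.proj := by
  obtain ⟨e⟩ := (exists_proj_equiv (⊥ : Submodule A A)).choose_spec
  have : Subsingleton (0 : Vertex A).proj := e.toEquiv.subsingleton
  exact ⟨fun h => h ▸ this, fun _ => ext_equiv 0⟩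

variable {M M' : Type*} [AddCommGroup M] [Module A M] [AddCommGroup M'] [Module A M']

/-- `v.Covers M` says that `M` is a quotient of the uniserial projective `v.proj`, which is then
the projective cover of `M` if `M` is nonzero. -/
def Covers (v : Vertex A) (M : Type*) [AddCommGroup M] [Module A M] : Prop :=
  ∃ g : v.proj →ₗ[A] M, Function.Surjective g

theorem Covers.of_surjective {v : Vertex A} (h : v.Covers M) {g : M →ₗ[A] M'}
    (hg : Function.Surjective g) : v.Covers M' :=
  let ⟨f, hf⟩ := h
  ⟨g ∘ₗ f, hg.comp hf⟩

theorem Covers.isUniserialModule {v : Vertex A} (h : v.Covers M) : IsUniserialModule A M :=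
  let ⟨_, hg⟩ := h
  .of_surjective hg

theorem Covers.finite [IsArtinianRing A] {v : Vertex A} (h : v.Covers M) : Module.Finite A M :=
  let ⟨_, hg⟩ := h
  .of_surjective _ hg

theorem Covers.eq [Nontrivial M] {v w : Vertex A} (hv : v.Covers M) (hw : w.Covers M) : v = w := by
  obtain ⟨g, hg⟩ := hv
  obtain ⟨g', hg'⟩ := hw
  obtain ⟨f, hf⟩ := Module.projective_lifting_property g' g hg'
  have hsurj : Function.Surjective f := IsUniserialModule.surjective_of_comp (hf ▸ hg)
  have : Nontrivial w.proj := hg'.nontrivial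
  exact ext_equiv (.ofBijective f ⟨IsUniserialModule.injective_of_projective hsurj, hsurj⟩)

instance [IsArtinianRing A] : Finite (Vertex A) := by
  obtain ⟨ι, _, S, hS⟩ := exists_finite_simple_representatives A
  have hcode (v : Vertex A) : ∃ c : Option ι, (c = none → v = 0) ∧
      ∀ i, c = some i → Nontrivial (S i) ∧ v.Covers (S i) := by
    rcases subsingleton_or_nontrivial v.proj with hv | hv
    · exact ⟨none, fun _ => eq_zero_iff.2 hv, by simp⟩
    · have : IsSimpleModule A (v.proj ⧸ Module.jacobson A v.proj) :=
        isSimpleModule_iff_isCoatom.2 IsUniserialModule.isCoatom_jacobson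
      obtain ⟨i, ⟨e⟩⟩ := hS (v.proj ⧸ Module.jacobson A v.proj)
      have hcover : v.Covers (S i) := ⟨e.symm.toLinearMap ∘ₗ Submodule.mkQ _,
        e.symm.surjective.comp (Submodule.mkQ_surjective _)⟩
      have := IsSimpleModule.congr e
      refine ⟨some i, by simp, ?_⟩
      rintro _ ⟨⟩
      exact ⟨IsSimpleModule.nontrivial A _, hcover⟩
  choose c hnone hsome using hcode
  refine Finite.of_injective c fun v w hvw => ?_
  cases hw : c w with
  | none => rw [hnone v (hvw.trans hw), hnone w hw]
  | some i =>
    have := (hsome w i hw).1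
    exact (hsome v i (hvw.trans hw)).2.eq (hsome w i hw).2

end Vertex

open Vertex

variable {A} [IsArtinianRing A] (hNak : IsNakayama A)
include hNak

theorem IsNakayama.exists_covers (M : Type) [AddCommGroup M] [Module A M]
    [IsUniserialModule A M] : ∃ v : Vertex A, v.Covers M ∧ (Subsingleton M → v = 0) := by
  rcases subsingleton_or_nontrivial M with _ | hM
  · exact ⟨0, ⟨0, fun x => ⟨0, Subsingleton.elim _ _⟩⟩, fun _ => rfl⟩
  · obtain ⟨P, _, _, g, hg⟩ := hNak.exists_uniserial_projective_surjective M
    obtain ⟨v, ⟨e⟩⟩ := exists_proj_equiv P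
    exact ⟨v, ⟨g ∘ₗ e.toLinearMap, hg.comp e.surjective⟩,
      fun _ => (not_nontrivial M hM).elim⟩

/-- The vertex covering the radical of `v.proj`; it is `0` if `v.proj` is simple or zero. -/
def IsNakayama.next (v : Vertex A) : Vertex A :=
  (hNak.exists_covers (Module.jacobson A v.proj)).choose

theorem IsNakayama.covers_next (v : Vertex A) :
    (hNak.next v).Covers (Module.jacobson A v.proj) :=
  (hNak.exists_covers _).choose_spec.1

theorem IsNakayama.next_eq_zero {v : Vertex A} (h : natLength A v.proj ≤ 1) : hNak.next v = 0 :=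
  (hNak.exists_covers _).choose_spec.2 <| (natLength_eq_zero_iff A _).1 <| by
    rw [IsUniserialModule.natLength_jacobson, Nat.sub_eq_zero_of_le h]

theorem IsNakayama.natLength_proj_le (v : Vertex A) :
    natLength A v.proj ≤ natLength A (hNak.next v).proj + 1 := by
  obtain ⟨g, hg⟩ := hNak.covers_next v
  have h := natLength_le_of_surjective hg
  rw [IsUniserialModule.natLength_jacobson] at h
  exact Nat.sub_le_iff_le_add.1 h

theorem IsNakayama.covers_next_jacobson {v : Vertex A} {M : Type*} [AddCommGroup M] [Module A M]
    [Nontrivial M] (h : v.Covers M) : (hNak.next v).Covers (Module.jacobson A M) := by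
  obtain ⟨g, hg⟩ := h
  rw [← IsUniserialModule.map_jacobson hg]
  exact (hNak.covers_next v).of_surjective (g.submoduleMap_surjective _)

theorem IsNakayama.covers_iterate_next {v : Vertex A} {M : Type*} [AddCommGroup M] [Module A M]
    (h : v.Covers M) {N : Submodule A M} {k : ℕ} (hN : natLength A N + k = natLength A M) :
    ((hNak.next)^[k] v).Covers N := by
  induction k generalizing v M with
  | zero =>
    have := h.finite
    rw [eq_top_of_natLength_eq hN]
    exact h.of_surjective Submodule.topEquiv.symm.surjective
  | succ k ih =>
    have := h.finite
    have := h.isUniserialModule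
    have : Nontrivial M := (natLength_pos_iff A M).1 (by lia)
    have hle : N ≤ Module.jacobson A M := IsUniserialModule.le_jacobson <| by
      rintro rfl
      rw [natLength_congr Submodule.topEquiv] at hN
      lia
    let e := Submodule.comapSubtypeEquivOfLe hle
    have hlen := IsUniserialModule.natLength_jacobson A M
    rw [Function.iterate_succ_apply]
    exact (ih (hNak.covers_next_jacobson h) (by rw [natLength_congr e]; lia)).of_surjective
      e.surjective

theorem IsNakayama.exists_simple_covers_iterate_next {v : Vertex A} {k : ℕ}
    (hk : k < natLength A v.proj) :
    ∃ (K : Submodule A v.proj) (B : Submodule A (v.proj ⧸ K)),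
      natLength A (v.proj ⧸ K) = k + 1 ∧ IsSimpleModule A B ∧ ((hNak.next)^[k] v).Covers B := by
  obtain ⟨K, hK⟩ := exists_submodule_natLength_eq A v.proj
    (k := natLength A v.proj - (k + 1)) (Nat.sub_le _ _)
  have hlen : natLength A (v.proj ⧸ K) = k + 1 := by
    have := natLength_quotient_add_natLength K
    lia
  obtain ⟨B, hB⟩ := exists_submodule_natLength_eq A (v.proj ⧸ K) (k := 1) (by lia)
  exact ⟨K, B, hlen, (natLength_eq_one_iff A B).1 hB,
    hNak.covers_iterate_next ⟨K.mkQ, K.mkQ_surjective⟩ (by lia)⟩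

omit hNak in
theorem Vertex.Covers.nonempty_equiv_of_isSimpleModule {v : Vertex A} {M M' : Type*}
    [AddCommGroup M] [Module A M] [IsSimpleModule A M] [AddCommGroup M'] [Module A M']
    [IsSimpleModule A M'] (h : v.Covers M) (h' : v.Covers M') : Nonempty (M ≃ₗ[A] M') := by
  obtain ⟨g, hg⟩ := h
  obtain ⟨g', hg'⟩ := h'
  exact IsUniserialModule.nonempty_equiv_of_surjective hg hg' <|
    ((natLength_eq_one_iff A M).2 ‹_›).trans ((natLength_eq_one_iff A M').2 ‹_›).symm

theorem IsNakayama.next_injOn {v w : Vertex A} (h : hNak.next v = hNak.next w)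
    (hv : hNak.next v ≠ 0) : v = w := by
  have hlen {u : Vertex A} (hu : hNak.next u ≠ 0) : 1 < natLength A u.proj :=
    not_le.1 (mt hNak.next_eq_zero hu)
  obtain ⟨K, B, hK, _, hB⟩ := hNak.exists_simple_covers_iterate_next (hlen hv)
  obtain ⟨K', B', hK', _, hB'⟩ := hNak.exists_simple_covers_iterate_next (hlen (h ▸ hv))
  rw [Function.iterate_one] at hB hB'
  obtain ⟨e⟩ := (h ▸ hB).nonempty_equiv_of_isSimpleModule hB'
  obtain ⟨e'⟩ := hNak.nonempty_equiv_of_simple_injective B.subtype_injective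
    (i' := B'.subtype ∘ₗ e.toLinearMap) (B'.subtype_injective.comp e.injective)
    (hK.trans hK'.symm)
  have : Nontrivial (w.proj ⧸ K') := (natLength_pos_iff A _).1 (by lia)
  have hcover : v.Covers (v.proj ⧸ K) := ⟨K.mkQ, K.mkQ_surjective⟩
  exact (hcover.of_surjective e'.surjective).eq ⟨K'.mkQ, K'.mkQ_surjective⟩

/-- The Kupisch system of a Nakayama algebra: its sequence `len` is the Kupisch series. -/
def IsNakayama.kupischSystem : KupischSystem (Vertex A) where
  next := hNak.next
  len v := natLength A v.proj
  next_zero := hNak.next_eq_zero <|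
    ((natLength_eq_zero_iff A _).2 (Vertex.eq_zero_iff.1 rfl)).trans_le zero_le_one
  len_eq_zero_iff v := (natLength_eq_zero_iff A v.proj).trans Vertex.eq_zero_iff.symm
  len_le := hNak.natLength_proj_le
  next_injOn _ _ := hNak.next_injOn

end ArtinAlg

section ProjectiveDimension

variable {R : Type u} [Ring R] {P M : Type u} [AddCommGroup P] [Module R P] [AddCommGroup M]
  [Module R M]

theorem hasProjectiveDimensionLT_ker_iff [Module.Projective R P] {g : P →ₗ[R] M}
    (hg : Function.Surjective g) (n : ℕ) :
    HasProjectiveDimensionLT (ModuleCat.of R M) (n + 2) ↔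
      HasProjectiveDimensionLT (ModuleCat.of R (LinearMap.ker g)) (n + 1) :=
  (LinearMap.shortExact_shortComplexKer hg).hasProjectiveDimensionLT_X₃_iff n
    ((IsProjective.iff_projective P).1 inferInstance)

theorem hasProjectiveDimensionLT_one_iff :
    HasProjectiveDimensionLT (ModuleCat.of R M) 1 ↔ Module.Projective R M := by
  rw [← projective_iff_hasProjectiveDimensionLT_one, ← IsProjective.iff_projective]

theorem hasProjectiveDimensionLT_zero_iff :
    HasProjectiveDimensionLT (ModuleCat.of R M) 0 ↔ Subsingleton M := by
  rw [hasProjectiveDimensionLT_zero_iff_isZero, ModuleCat.isZero_iff_subsingleton]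

theorem IsUniserialModule.hasProjectiveDimensionLT_ker_iff [IsUniserialModule R P]
    [Module.Projective R P] [Nontrivial M] {g : P →ₗ[R] M} (hg : Function.Surjective g) (n : ℕ) :
    HasProjectiveDimensionLT (ModuleCat.of R M) (n + 1) ↔
      HasProjectiveDimensionLT (ModuleCat.of R (LinearMap.ker g)) n := by
  cases n with
  | zero =>
    rw [hasProjectiveDimensionLT_one_iff, hasProjectiveDimensionLT_zero_iff,
      Submodule.subsingleton_iff_eq_bot, LinearMap.ker_eq_bot]
    exact ⟨fun _ => injective_of_projective hg, fun h => .of_equiv (.ofBijective g ⟨h, hg⟩)⟩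
  | succ n => exact _root_.hasProjectiveDimensionLT_ker_iff hg n

end ProjectiveDimension

namespace ArtinAlg

section ProjDim

variable {A : Type} [Ring A]

theorem projDimLE_iff {n : ℕ} {M : ModuleCat.{0} A} :
    ProjDimLE A n M ↔ HasProjectiveDimensionLT M (n + 1) := by
  induction n generalizing M with
  | zero =>
    rw [← projective_iff_hasProjectiveDimensionLT_one]
    exact ⟨fun h => by cases h; assumption, .zero M⟩
  | succ n ih =>
    have hkernel {P : ModuleCat.{0} A} (f : P ⟶ M) (hP : Projective P) (hf : Epi f) :
        HasProjectiveDimensionLT M (n + 2) ↔ HasProjectiveDimensionLT (kernel f) (n + 1) :=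
      (ShortComplex.ShortExact.mk (S := .mk _ f (kernel.condition f))
        (ShortComplex.exact_kernel f)).hasProjectiveDimensionLT_X₃_iff n hP
    constructor
    · rintro (_ | ⟨_, _, _, f, hP, hf, h⟩)
      exact (hkernel f hP hf).2 (ih.1 h)
    · exact fun h => .succ n M _ (Projective.π M) inferInstance inferInstance
        (ih.2 ((hkernel _ inferInstance inferInstance).1 h))

theorem projDim_eq {n : ℕ} {M : ModuleCat.{0} A} (h : HasProjectiveDimensionLT M (n + 1))
    (h' : ¬ HasProjectiveDimensionLT M n) : projDim A M = n := by
  refine le_antisymm (sInf_le ⟨n, rfl, projDimLE_iff.2 h⟩) (le_sInf ?_)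
  rintro _ ⟨m, rfl, hm⟩
  by_contra hlt
  have hmn : m < n := by exact_mod_cast not_le.1 hlt
  have := projDimLE_iff.1 hm
  exact h' (hasProjectiveDimensionLT_of_ge M (m + 1) n hmn)

end ProjDim

section Interval

variable {A : Type} [Ring A] [IsArtinianRing A] (hNak : IsNakayama A)

/-- `M` is the uniserial module of length `j - i` whose top sits at position `i` of the walk
`t, next t, next (next t), …`; its composition factors occupy the positions in `[i, j)`. -/
def IsNakayama.IsInterval (t : Vertex A) (i j : ℕ) (M : Type*) [AddCommGroup M] [Module A M] :
    Prop :=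
  i + natLength A M = j ∧ ((hNak.next)^[i] t).Covers M

variable {hNak} {t : Vertex A} {i j : ℕ} {M : Type} [AddCommGroup M] [Module A M]

theorem IsNakayama.IsInterval.nontrivial (h : hNak.IsInterval t i j M) (hij : i < j) :
    Nontrivial M := by
  have := h.2.finite
  have := h.1
  exact (natLength_pos_iff A M).1 (by lia)

theorem IsNakayama.IsInterval.ker (h : hNak.IsInterval t i j M)
    {g : ((hNak.next)^[i] t).proj →ₗ[A] M} (hg : Function.Surjective g) :
    hNak.IsInterval t j (hNak.kupischSystem.projEnd t i) (LinearMap.ker g) := by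
  have hlen := natLength_ker_add_natLength hg
  rw [← h.1]
  refine ⟨?_, ?_⟩
  · rw [add_assoc, add_comm (natLength A M), hlen]
    rfl
  · rw [add_comm, Function.iterate_add_apply]
    exact hNak.covers_iterate_next ⟨.id, Function.surjective_id⟩ hlen

theorem IsNakayama.IsInterval.hasProjectiveDimensionLT_succ_and_not
    (h : hNak.IsInterval t i j M) {n : ℕ} (hn : StabilizesAt (hNak.kupischSystem.projEnd t) i j n) :
    HasProjectiveDimensionLT (ModuleCat.of A M) (n + 1) ∧
      ¬ HasProjectiveDimensionLT (ModuleCat.of A M) n := by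
  have := h.nontrivial (hn.1 0 n.zero_le)
  obtain ⟨g, hg⟩ := h.2
  induction n generalizing i j M with
  | zero =>
    have hker : natLength A (LinearMap.ker g) = 0 := by
      have := (h.ker hg).1
      have : j = hNak.kupischSystem.projEnd t i := hn.2
      lia
    rw [IsUniserialModule.hasProjectiveDimensionLT_ker_iff hg, hasProjectiveDimensionLT_zero_iff,
      hasProjectiveDimensionLT_zero_iff, not_subsingleton_iff_nontrivial]
    exact ⟨(natLength_eq_zero_iff A _).1 hker, this⟩
  | succ n ih =>
    have hker := h.ker hg
    obtain ⟨_, hg'⟩ := hker.2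
    rw [IsUniserialModule.hasProjectiveDimensionLT_ker_iff hg,
      IsUniserialModule.hasProjectiveDimensionLT_ker_iff hg]
    exact ih hker hn.syzygy (hker.nontrivial (hn.syzygy.1 0 n.zero_le)) _ hg'

theorem IsNakayama.IsInterval.projDim_eq (h : hNak.IsInterval t i j M) {n : ℕ}
    (hn : StabilizesAt (hNak.kupischSystem.projEnd t) i j n) :
    projDim A (ModuleCat.of A M) = n :=
  let ⟨hlt, hge⟩ := h.hasProjectiveDimensionLT_succ_and_not hn
  ArtinAlg.projDim_eq hlt hge

end Interval

section InjectiveEnvelope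

variable {A : Type} [Ring A] (hNak : IsNakayama A)
include hNak

theorem IsNakayama.isUniserialModule_of_isInjectiveEnvelopeHom {S I : ModuleCat.{0} A}
    [IsSimpleModule A S] {e : S ⟶ I} (he : IsInjectiveEnvelopeHom A e) :
    IsUniserialModule A I := by
  obtain ⟨-, hmono, hess⟩ := he
  have := IsSimpleModule.nontrivial A S
  refine hNak.isUniserialModule_of_forall_le (B := LinearMap.range e.hom) ?_ fun N hN => ?_
  · have hinj := (ModuleCat.mono_iff_injective e).1 hmono
    rw [ne_eq, LinearMap.range_eq_bot]
    intro h0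
    obtain ⟨x, hx⟩ := exists_ne (0 : S)
    exact hx (hinj ((LinearMap.congr_fun h0 x).trans (map_zero e.hom).symm))
  · rw [← N.ker_mkQ, LinearMap.range_le_ker_iff]
    refine (LinearMap.injective_or_eq_zero _).resolve_left fun hinj => hN ?_
    have hmkQ := hess (ModuleCat.of A (I ⧸ N)) (ModuleCat.ofHom N.mkQ)
      ((ModuleCat.mono_iff_injective _).2 hinj)
    rw [← N.ker_mkQ]
    exact LinearMap.ker_eq_bot.2 ((ModuleCat.mono_iff_injective _).1 hmkQ)

variable [IsArtinianRing A] {S J : Type} [AddCommGroup S] [Module A S] [IsSimpleModule A S]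
  [AddCommGroup J] [Module A J] {e : S →ₗ[A] J} (he : Function.Injective e)
  {t : Vertex A} (ht : t.Covers J) {s : ℕ} (hs : natLength A J = s + 1)
include he ht hs

theorem IsNakayama.iterate_next_covers_of_simple_injective : ((hNak.next)^[s] t).Covers S := by
  let e' := LinearEquiv.ofInjective e he
  refine (hNak.covers_iterate_next ht (N := LinearMap.range e) ?_).of_surjective e'.symm.surjective
  rw [← natLength_congr e', (natLength_eq_one_iff A S).2 inferInstance, hs, add_comm]

theorem IsNakayama.natLength_proj_le_of_next_eq (hJ : Module.Injective A J) {u : Vertex A}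
    (hu : hNak.next u = t) : natLength A u.proj ≤ s + 1 := by
  by_contra! hlt
  have := ht.isUniserialModule
  have := ht.finite
  have := IsSimpleModule.nontrivial A S
  obtain ⟨K, B, hK, _, hB⟩ := hNak.exists_simple_covers_iterate_next hlt
  rw [Function.iterate_succ_apply, hu] at hB
  obtain ⟨b⟩ := (hNak.iterate_next_covers_of_simple_injective he ht hs)
    |>.nonempty_equiv_of_isSimpleModule hB
  obtain ⟨f, hf, -⟩ := IsUniserialModule.exists_injective_extension hJ
    (i := B.subtype ∘ₗ b.toLinearMap) (B.subtype_injective.comp b.injective) he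
  have := natLength_le_of_injective hf
  lia

end InjectiveEnvelope

end ArtinAlg

open ArtinAlg in
theorem statement_9_general (A : Type) [Ring A] [IsArtinianRing A] (hNak : IsNakayama A)
    (S : ModuleCat.{0} A) (hS : IsSimpleModule A ↥S)
    (I : ModuleCat.{0} A) (hI : IsInjEnvOf A S I) :
    (∃ n : ℕ, projDim A S = n ∧ Odd n) ∨ (∃ n : ℕ, projDim A I = n ∧ Even n) := by
  obtain ⟨e, henv⟩ := hI
  have he : Function.Injective e.hom := (ModuleCat.mono_iff_injective e).1 henv.2.1
  have hinj : Module.Injective A I := (Module.injective_iff_injective_object A I).2 henv.1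
  have := hNak.isUniserialModule_of_isInjectiveEnvelopeHom henv
  have := IsUniserialModule.finite A I
  have := IsSimpleModule.nontrivial A S
  obtain ⟨s, hs⟩ := Nat.exists_eq_add_one.2 ((natLength_pos_iff A I).2 he.nontrivial)
  obtain ⟨t, ht, -⟩ := hNak.exists_covers I
  have hintervalI : hNak.IsInterval t 0 (s + 1) I := ⟨by rw [hs, zero_add], ht⟩
  have hintervalS : hNak.IsInterval t s (s + 1) S :=
    ⟨by rw [(natLength_eq_one_iff A S).2 hS],
      hNak.iterate_next_covers_of_simple_injective he ht hs⟩
  obtain ⟨g, hg⟩ := ht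
  have hlt : s < natLength A t.proj := hs.symm.trans_le (natLength_le_of_surjective hg)
  have hmax (u : Vertex A) (hu : hNak.next u = t) : natLength A u.proj ≤ s + 1 :=
    hNak.natLength_proj_le_of_next_eq he ⟨g, hg⟩ hs hinj hu
  rcases hNak.kupischSystem.exists_stabilizesAt_projEnd hlt hmax with
    ⟨n, hn, hstab⟩ | ⟨n, hn, hstab⟩
  · exact .inl ⟨n, hintervalS.projDim_eq hstab, hn⟩
  · exact .inr ⟨n, hintervalI.projDim_eq hstab, hn⟩

open ArtinAlg in
/-- Let `A` be a Nakayama algebra and `S` a simple module. Then `pd S`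
is finite and odd, or `pd (I S)` is finite and even; in particular at least one of
`S` and `I S` has finite projective dimension. -/
theorem statement_9 (R : Type) [CommRing R] [IsArtinianRing R]
    (A : Type) [Ring A] [Algebra R A] [Module.Finite R A]
    (hNak : IsNakayama A)
    (S : ModuleCat.{0} A) (hS : IsSimpleModule A ↥S)
    (I : ModuleCat.{0} A) (hI : IsInjEnvOf A S I) :
    (∃ n : ℕ, projDim A S = n ∧ Odd n) ∨ (∃ n : ℕ, projDim A I = n ∧ Even n) :=
  have : IsArtinianRing A := IsArtinianRing.of_finite R A
  statement_9_general A hNak S hS I hI
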